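/- Let φ(x) be a formula of the correspondence language with at most the free variable x. Then φ(x) is logically equivalent to the (1,2)-standard x-translation ST_12(I,x) of some modal intuitionistic formula I if and only if φ(x) is invariant with respect to (1,2)-modal asimulations. -/

import Mathlib

namespace ModalIntAsim

/-- Binary relation symbols of the correspondence vocabulary: R, R_□, R_◇. -/
inductive RelSym : Type
  | r | box | diam
deriving DecidableEq

/-- Formulas of the correspondence language: classical first-order logic without
identity, with variables indexed by `ℕ`, unary predicate letters `P n` (n : ℕ),
and the three binary relation symbols. -/
inductive FOForm : Type
  | falsum : FOForm
  | pred : ℕ → ℕ → FOForm            -- `pred n v` is `P_n(x_v)`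
  | rel : RelSym → ℕ → ℕ → FOForm    -- `rel s v w` is `S(x_v, x_w)`
  | conj : FOForm → FOForm → FOForm
  | disj : FOForm → FOForm → FOForm
  | impl : FOForm → FOForm → FOForm
  | all : ℕ → FOForm → FOForm
  | ex : ℕ → FOForm → FOForm

namespace FOForm

/-- Free variables of a correspondence formula. -/
def freeVars : FOForm → Finset ℕ
  | falsum => ∅
  | pred _ v => {v}
  | rel _ v w => {v, w}
  | conj f g => f.freeVars ∪ g.freeVars
  | disj f g => f.freeVars ∪ g.freeVars
  | impl f g => f.freeVars ∪ g.freeVars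
  | all v f => f.freeVars \ {v}
  | ex v f => f.freeVars \ {v}

/-- The unary predicate letters occurring in a formula (the binary relation
symbols R, R_□, R_◇ are regarded as belonging to every vocabulary Σ_φ). -/
def predLetters : FOForm → Finset ℕ
  | falsum => ∅
  | pred n _ => {n}
  | rel _ _ _ => ∅
  | conj f g => f.predLetters ∪ g.predLetters
  | disj f g => f.predLetters ∪ g.predLetters
  | impl f g => f.predLetters ∪ g.predLetters
  | all _ f => f.predLetters
  | ex _ f => f.predLetters

/-- Degree of a formula: the greatest number of nested quantifiers. -/
def degree : FOForm → ℕ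
  | falsum => 0
  | pred _ _ => 0
  | rel _ _ _ => 0
  | conj f g => max f.degree g.degree
  | disj f g => max f.degree g.degree
  | impl f g => max f.degree g.degree
  | all _ f => f.degree + 1
  | ex _ f => f.degree + 1

end FOForm

/-- A model of the correspondence language: a domain together with
interpretations of R, R_□, R_◇ and of the unary predicate letters.
(A Θ-model only consults the letters in Θ.) -/
structure Model : Type 1 where
  U : Type
  rel : U → U → Prop
  relBox : U → U → Prop
  relDiam : U → U → Prop
  pred : ℕ → U → Prop

/-- Interpretation of a binary relation symbol in a model. -/
def Model.relOf (M : Model) : RelSym → M.U → M.U → Prop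
  | .r => M.rel
  | .box => M.relBox
  | .diam => M.relDiam

/-- Tarskian satisfaction of a formula in a model under an assignment. -/
def Sat (M : Model) : FOForm → (ℕ → M.U) → Prop
  | .falsum, _ => False
  | .pred n v, α => M.pred n (α v)
  | .rel s v w, α => M.relOf s (α v) (α w)
  | .conj f g, α => Sat M f α ∧ Sat M g α
  | .disj f g, α => Sat M f α ∨ Sat M g α
  | .impl f g, α => Sat M f α → Sat M g α
  | .all v f, α => ∀ u : M.U, Sat M f (Function.update α v u)
  | .ex v f, α => ∃ u : M.U, Sat M f (Function.update α v u)

/-- `M, a ⊨ φ(x)`: φ is true in `M` under any assignment sending `x` to `a`. -/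
def SatAt (M : Model) (a : M.U) (x : ℕ) (φ : FOForm) : Prop :=
  ∀ α : ℕ → M.U, α x = a → Sat M φ α

/-- Logical equivalence of correspondence formulas. -/
def Equiv (φ ψ : FOForm) : Prop :=
  ∀ (M : Model) (α : ℕ → M.U), Sat M φ α ↔ Sat M ψ α

/-- Logical entailment between correspondence formulas. -/
def Entails (φ ψ : FOForm) : Prop :=
  ∀ (M : Model) (α : ℕ → M.U), Sat M φ α → Sat M ψ α

/-- Modal intuitionistic formulas: built from propositional letters `p n`
using ⊥, ∧, ∨, →, □, ◇. -/
inductive MForm : Type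
  | bot : MForm
  | prop : ℕ → MForm
  | conj : MForm → MForm → MForm
  | disj : MForm → MForm → MForm
  | impl : MForm → MForm → MForm
  | box : MForm → MForm
  | diam : MForm → MForm

/-- The (i,j)-standard x-translation `ST_ij`.  `boxOne = true` means the box
clause (□₁) is used (i = 1), `boxOne = false` means (□₂) (i = 2); likewise
`diamOne = true` means the diamond clause (◇₁) (j = 1) and `diamOne = false`
means (◇₂) (j = 2).  Bound variables are chosen fresh as `x+1`, `x+2`. -/
def ST (boxOne diamOne : Bool) : MForm → ℕ → FOForm
  | .bot, _ => .falsum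
  | .prop n, x => .pred n x
  | .conj I J, x => .conj (ST boxOne diamOne I x) (ST boxOne diamOne J x)
  | .disj I J, x => .disj (ST boxOne diamOne I x) (ST boxOne diamOne J x)
  | .impl I J, x =>
      .all (x + 1) (.impl (.rel .r x (x + 1))
        (.impl (ST boxOne diamOne I (x + 1)) (ST boxOne diamOne J (x + 1))))
  | .box I, x =>
      if boxOne then
        .all (x + 1) (.impl (.rel .box x (x + 1)) (ST boxOne diamOne I (x + 1)))
      else
        .all (x + 1) (.impl (.rel .r x (x + 1))
          (.all (x + 2) (.impl (.rel .box (x + 1) (x + 2)) (ST boxOne diamOne I (x + 2)))))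
  | .diam I, x =>
      if diamOne then
        .ex (x + 1) (.conj (.rel .diam x (x + 1)) (ST boxOne diamOne I (x + 1)))
      else
        .all (x + 1) (.impl (.rel .r x (x + 1))
          (.ex (x + 2) (.conj (.rel .diam (x + 1) (x + 2)) (ST boxOne diamOne I (x + 2)))))

/-! ### Conditions on relations between tuples (the k-asimulation conditions).
A relation between the two models is represented by its two directed
components; `N` is the model of the source tuple and `P` that of the target
tuple.  A tuple `(ā_m, a)` is represented as the list `as ++ [a]`, with
`m = as.length`. -/

section TupleConds

variable (N P : Model)

/-- The "p-type" condition: related tuples are nonempty and of equal length. -/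
def TypeCond (A : List N.U → List P.U → Prop) : Prop :=
  ∀ as bs, A as bs → as ≠ [] ∧ as.length = bs.length

/-- (p-base). -/
def BaseCond (Θ : Set ℕ) (A : List N.U → List P.U → Prop) : Prop :=
  ∀ (as : List N.U) (bs : List P.U) (a : N.U) (b : P.U),
    A (as ++ [a]) (bs ++ [b]) → ∀ n ∈ Θ, N.pred n a → P.pred n b

/-- (p-step). -/
def StepCond (k : ℕ) (A : List N.U → List P.U → Prop)
    (Arev : List P.U → List N.U → Prop) : Prop :=
  ∀ (as : List N.U) (bs : List P.U) (a : N.U) (b d : P.U),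
    A (as ++ [a]) (bs ++ [b]) → P.rel b d → as.length < k →
    ∃ c : N.U, N.rel a c ∧ A (as ++ [a, c]) (bs ++ [b, d]) ∧
      Arev (bs ++ [b, d]) (as ++ [a, c])

/-- (p-box-1). -/
def Box1Cond (k : ℕ) (A : List N.U → List P.U → Prop) : Prop :=
  ∀ (as : List N.U) (bs : List P.U) (a : N.U) (b d : P.U),
    A (as ++ [a]) (bs ++ [b]) → P.relBox b d → as.length < k →
    ∃ c : N.U, N.relBox a c ∧ A (as ++ [a, c]) (bs ++ [b, d])

/-- (p-box-2). -/
def Box2Cond (k : ℕ) (A : List N.U → List P.U → Prop) : Prop :=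
  ∀ (as : List N.U) (bs : List P.U) (a : N.U) (b d f : P.U),
    A (as ++ [a]) (bs ++ [b]) → P.rel b d → P.relBox d f → as.length + 1 < k →
    ∃ c e : N.U, N.rel a c ∧ N.relBox c e ∧ A (as ++ [a, c, e]) (bs ++ [b, d, f])

/-- (p-diam-1). -/
def Diam1Cond (k : ℕ) (A : List N.U → List P.U → Prop) : Prop :=
  ∀ (as : List N.U) (bs : List P.U) (a c : N.U) (b : P.U),
    A (as ++ [a]) (bs ++ [b]) → N.relDiam a c → as.length < k →
    ∃ d : P.U, P.relDiam b d ∧ A (as ++ [a, c]) (bs ++ [b, d])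

/-- (p-diam-2(1)). -/
def Diam2aCond (k : ℕ) (A B : List N.U → List P.U → Prop) : Prop :=
  ∀ (as : List N.U) (bs : List P.U) (a : N.U) (b d : P.U),
    A (as ++ [a]) (bs ++ [b]) → P.rel b d → as.length + 1 < k →
    ∃ c : N.U, N.rel a c ∧ B (as ++ [a, c]) (bs ++ [b, d])

/-- (p-diam-2(2)). -/
def Diam2bCond (k : ℕ) (B A : List N.U → List P.U → Prop) : Prop :=
  ∀ (as : List N.U) (bs : List P.U) (a c : N.U) (b : P.U),
    B (as ++ [a]) (bs ++ [b]) → N.relDiam a c → as.length < k →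
    ∃ d : P.U, P.relDiam b d ∧ A (as ++ [a, c]) (bs ++ [b, d])

end TupleConds

/-- An (i,1)-modal ⟨(M₁,t),(M₂,u)⟩_k-asimulation (j = 1): a single relation `A`
given by its two directed components `A12`, `A21`. -/
def IsKAsimD1 (boxOne : Bool) (Θ : Set ℕ) (M₁ M₂ : Model) (t : M₁.U) (u : M₂.U) (k : ℕ)
    (A12 : List M₁.U → List M₂.U → Prop) (A21 : List M₂.U → List M₁.U → Prop) : Prop :=
  TypeCond M₁ M₂ A12 ∧ TypeCond M₂ M₁ A21 ∧
  A12 [t] [u] ∧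
  BaseCond M₁ M₂ Θ A12 ∧ BaseCond M₂ M₁ Θ A21 ∧
  StepCond M₁ M₂ k A12 A21 ∧ StepCond M₂ M₁ k A21 A12 ∧
  (if boxOne then Box1Cond M₁ M₂ k A12 ∧ Box1Cond M₂ M₁ k A21
   else Box2Cond M₁ M₂ k A12 ∧ Box2Cond M₂ M₁ k A21) ∧
  Diam1Cond M₁ M₂ k A12 ∧ Diam1Cond M₂ M₁ k A21

/-- An (i,2)-modal ⟨(M₁,t),(M₂,u)⟩_k-asimulation (j = 2): an ordered pair
(A, B) of relations, each given by its two directed components. -/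
def IsKAsimD2 (boxOne : Bool) (Θ : Set ℕ) (M₁ M₂ : Model) (t : M₁.U) (u : M₂.U) (k : ℕ)
    (A12 : List M₁.U → List M₂.U → Prop) (A21 : List M₂.U → List M₁.U → Prop)
    (B12 : List M₁.U → List M₂.U → Prop) (B21 : List M₂.U → List M₁.U → Prop) : Prop :=
  TypeCond M₁ M₂ A12 ∧ TypeCond M₂ M₁ A21 ∧
  TypeCond M₁ M₂ B12 ∧ TypeCond M₂ M₁ B21 ∧
  A12 [t] [u] ∧
  BaseCond M₁ M₂ Θ A12 ∧ BaseCond M₂ M₁ Θ A21 ∧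
  StepCond M₁ M₂ k A12 A21 ∧ StepCond M₂ M₁ k A21 A12 ∧
  (if boxOne then Box1Cond M₁ M₂ k A12 ∧ Box1Cond M₂ M₁ k A21
   else Box2Cond M₁ M₂ k A12 ∧ Box2Cond M₂ M₁ k A21) ∧
  Diam2aCond M₁ M₂ k A12 B12 ∧ Diam2aCond M₂ M₁ k A21 B21 ∧
  Diam2bCond M₁ M₂ k B12 A12 ∧ Diam2bCond M₂ M₁ k B21 A21

/-- φ(x) is invariant with respect to (i,1)-modal k-asimulations. -/
def KInvariantD1 (boxOne : Bool) (x : ℕ) (φ : FOForm) (k : ℕ) : Prop :=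
  ∀ Θ : Set ℕ, (φ.predLetters : Set ℕ) ⊆ Θ →
  ∀ (M₁ M₂ : Model) (t : M₁.U) (u : M₂.U)
    (A12 : List M₁.U → List M₂.U → Prop) (A21 : List M₂.U → List M₁.U → Prop),
    IsKAsimD1 boxOne Θ M₁ M₂ t u k A12 A21 →
    ∀ (a : M₁.U) (b : M₂.U), A12 [a] [b] → SatAt M₁ a x φ → SatAt M₂ b x φ

/-- φ(x) is invariant with respect to (i,2)-modal k-asimulations. -/
def KInvariantD2 (boxOne : Bool) (x : ℕ) (φ : FOForm) (k : ℕ) : Prop :=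
  ∀ Θ : Set ℕ, (φ.predLetters : Set ℕ) ⊆ Θ →
  ∀ (M₁ M₂ : Model) (t : M₁.U) (u : M₂.U)
    (A12 : List M₁.U → List M₂.U → Prop) (A21 : List M₂.U → List M₁.U → Prop)
    (B12 : List M₁.U → List M₂.U → Prop) (B21 : List M₂.U → List M₁.U → Prop),
    IsKAsimD2 boxOne Θ M₁ M₂ t u k A12 A21 B12 B21 →
    ∀ (a : M₁.U) (b : M₂.U), A12 [a] [b] → SatAt M₁ a x φ → SatAt M₂ b x φ

/-! ### Conditions for asimulations *simpliciter* (relations between elements). -/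

section ElemConds

variable (N P : Model)

/-- (base). -/
def BaseCondE (Θ : Set ℕ) (A : N.U → P.U → Prop) : Prop :=
  ∀ (a : N.U) (b : P.U), A a b → ∀ n ∈ Θ, N.pred n a → P.pred n b

/-- (step). -/
def StepCondE (A : N.U → P.U → Prop) (Arev : P.U → N.U → Prop) : Prop :=
  ∀ (a : N.U) (b d : P.U), A a b → P.rel b d →
    ∃ c : N.U, N.rel a c ∧ A c d ∧ Arev d c

/-- (box-1). -/
def Box1CondE (A : N.U → P.U → Prop) : Prop :=
  ∀ (a : N.U) (b d : P.U), A a b → P.relBox b d →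
    ∃ c : N.U, N.relBox a c ∧ A c d

/-- (box-2). -/
def Box2CondE (A : N.U → P.U → Prop) : Prop :=
  ∀ (a : N.U) (b d f : P.U), A a b → P.rel b d → P.relBox d f →
    ∃ c e : N.U, N.rel a c ∧ N.relBox c e ∧ A e f

/-- (diam-1). -/
def Diam1CondE (A : N.U → P.U → Prop) : Prop :=
  ∀ (a c : N.U) (b : P.U), A a b → N.relDiam a c →
    ∃ d : P.U, P.relDiam b d ∧ A c d

/-- (diam-2(1)). -/
def Diam2aCondE (A B : N.U → P.U → Prop) : Prop :=
  ∀ (a : N.U) (b d : P.U), A a b → P.rel b d →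
    ∃ c : N.U, N.rel a c ∧ B c d

/-- (diam-2(2)). -/
def Diam2bCondE (B A : N.U → P.U → Prop) : Prop :=
  ∀ (a c : N.U) (b : P.U), B a b → N.relDiam a c →
    ∃ d : P.U, P.relDiam b d ∧ A c d

end ElemConds

/-- An (i,1)-modal ⟨(M₁,t),(M₂,u)⟩-asimulation (j = 1). -/
def IsAsimD1 (boxOne : Bool) (Θ : Set ℕ) (M₁ M₂ : Model) (t : M₁.U) (u : M₂.U)
    (A12 : M₁.U → M₂.U → Prop) (A21 : M₂.U → M₁.U → Prop) : Prop :=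
  A12 t u ∧
  BaseCondE M₁ M₂ Θ A12 ∧ BaseCondE M₂ M₁ Θ A21 ∧
  StepCondE M₁ M₂ A12 A21 ∧ StepCondE M₂ M₁ A21 A12 ∧
  (if boxOne then Box1CondE M₁ M₂ A12 ∧ Box1CondE M₂ M₁ A21
   else Box2CondE M₁ M₂ A12 ∧ Box2CondE M₂ M₁ A21) ∧
  Diam1CondE M₁ M₂ A12 ∧ Diam1CondE M₂ M₁ A21

/-- An (i,2)-modal ⟨(M₁,t),(M₂,u)⟩-asimulation (j = 2). -/
def IsAsimD2 (boxOne : Bool) (Θ : Set ℕ) (M₁ M₂ : Model) (t : M₁.U) (u : M₂.U)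
    (A12 : M₁.U → M₂.U → Prop) (A21 : M₂.U → M₁.U → Prop)
    (B12 : M₁.U → M₂.U → Prop) (B21 : M₂.U → M₁.U → Prop) : Prop :=
  A12 t u ∧
  BaseCondE M₁ M₂ Θ A12 ∧ BaseCondE M₂ M₁ Θ A21 ∧
  StepCondE M₁ M₂ A12 A21 ∧ StepCondE M₂ M₁ A21 A12 ∧
  (if boxOne then Box1CondE M₁ M₂ A12 ∧ Box1CondE M₂ M₁ A21
   else Box2CondE M₁ M₂ A12 ∧ Box2CondE M₂ M₁ A21) ∧
  Diam2aCondE M₁ M₂ A12 B12 ∧ Diam2aCondE M₂ M₁ A21 B21 ∧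
  Diam2bCondE M₁ M₂ B12 A12 ∧ Diam2bCondE M₂ M₁ B21 A21

/-- φ(x) is invariant with respect to (i,1)-modal asimulations. -/
def InvariantD1 (boxOne : Bool) (x : ℕ) (φ : FOForm) : Prop :=
  ∀ Θ : Set ℕ, (φ.predLetters : Set ℕ) ⊆ Θ →
  ∀ (M₁ M₂ : Model) (t : M₁.U) (u : M₂.U)
    (A12 : M₁.U → M₂.U → Prop) (A21 : M₂.U → M₁.U → Prop),
    IsAsimD1 boxOne Θ M₁ M₂ t u A12 A21 →
    ∀ (a : M₁.U) (b : M₂.U), A12 a b → SatAt M₁ a x φ → SatAt M₂ b x φ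

/-- φ(x) is invariant with respect to (i,2)-modal asimulations. -/
def InvariantD2 (boxOne : Bool) (x : ℕ) (φ : FOForm) : Prop :=
  ∀ Θ : Set ℕ, (φ.predLetters : Set ℕ) ⊆ Θ →
  ∀ (M₁ M₂ : Model) (t : M₁.U) (u : M₂.U)
    (A12 : M₁.U → M₂.U → Prop) (A21 : M₂.U → M₁.U → Prop)
    (B12 : M₁.U → M₂.U → Prop) (B21 : M₂.U → M₁.U → Prop),
    IsAsimD2 boxOne Θ M₁ M₂ t u A12 A21 B12 B21 →
    ∀ (a : M₁.U) (b : M₂.U), A12 a b → SatAt M₁ a x φ → SatAt M₂ b x φ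

/-! ### Types, complete conjunctions, ω-saturation. -/

/-- `int(φ,x,l)`: the set of (2,2)-standard x-translations of modal
intuitionistic formulas which are (Σ_φ,x,l)-formulas. -/
def intSet (φ : FOForm) (x l : ℕ) : Set FOForm :=
  {ψ | (∃ I : MForm, ψ = ST false false I x) ∧
    ψ.predLetters ⊆ φ.predLetters ∧ ψ.freeVars ⊆ {x} ∧ ψ.degree ≤ l}

/-- `tp_l(φ(x),M,a)`. -/
def tpSet (φ : FOForm) (x l : ℕ) (M : Model) (a : M.U) : Set FOForm :=
  {ψ | ψ ∈ intSet φ x l ∧ SatAt M a x ψ}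

/-- Conjunction of a nonempty list of formulas. -/
def listConj : FOForm → List FOForm → FOForm
  | ψ, [] => ψ
  | ψ, χ :: L => FOForm.conj ψ (listConj χ L)

/-- Ψ(x) is a complete (φ,x,k)-conjunction. -/
def IsCompleteConj (φ : FOForm) (x k : ℕ) (Ψ : FOForm) : Prop :=
  (∃ (ψ₀ : FOForm) (L : List FOForm), ψ₀ ∈ intSet φ x k ∧
    (∀ χ ∈ L, χ ∈ intSet φ x k) ∧ Ψ = listConj ψ₀ L) ∧
  ∃ (M : Model) (a : M.U), SatAt M a x (FOForm.conj Ψ φ) ∧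
    ∀ ψ ∈ tpSet φ x k M a, Entails Ψ ψ

/-- `int_x(Θ)` for the (i,j)-standard translation. -/
def intX (Θ : Set ℕ) (boxOne diamOne : Bool) (x : ℕ) : Set FOForm :=
  {ψ | (∃ I : MForm, ψ = ST boxOne diamOne I x) ∧ (ψ.predLetters : Set ℕ) ⊆ Θ}

/-- `tp_x(M,t)` for the (i,j)-standard translation. -/
def tpX (Θ : Set ℕ) (boxOne diamOne : Bool) (x : ℕ) (M : Model) (t : M.U) : Set FOForm :=
  {ψ | ψ ∈ intX Θ boxOne diamOne x ∧ SatAt M t x ψ}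

/-- `imp_x(M,t) = ⋂ { t̄p_x(M,u) : t R_◇ u }` (for the (2,2)-translation). -/
def impX (Θ : Set ℕ) (x : ℕ) (M : Model) (t : M.U) : Set FOForm :=
  {ψ | ψ ∈ intX Θ false false x ∧ ∀ u : M.U, M.relDiam t u → ¬ SatAt M u x ψ}

/-- ω-saturation: for every finite tuple of parameters (the first `n` values of
an assignment `α`) and every set `Γ` of formulas with finitely many free
variables beyond the parameters, if `Γ` is consistent with the first-order
theory of `[M,ā]` (i.e. satisfiable together with it in some model), then `Γ`
is realized in `[M,ā]`. -/
def OmegaSaturated (M : Model) : Prop :=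
  ∀ (n : ℕ) (α : ℕ → M.U) (Γ : Set FOForm),
    (∃ k : ℕ, ∀ γ ∈ Γ, γ.freeVars ⊆ Finset.range (n + k)) →
    (∃ (N : Model) (β : ℕ → N.U),
      (∀ ψ : FOForm, ψ.freeVars ⊆ Finset.range n → Sat M ψ α → Sat N ψ β) ∧
      ∀ γ ∈ Γ, Sat N γ β) →
    ∃ α' : ℕ → M.U, (∀ i < n, α' i = α i) ∧ ∀ γ ∈ Γ, Sat M γ α'

/-! ### Relativization to a class κ of models. -/

/-- κ(Θ) is first-order axiomatizable for every finite Θ (with R ∈ Θ): for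
every finite set `S` of unary predicate letters there is a set of Θ-sentences
axiomatizing membership in κ. -/
def FinAxiomatizable (κ : Set Model) : Prop :=
  ∀ S : Finset ℕ, ∃ Ax : Set FOForm,
    (∀ ψ ∈ Ax, ψ.freeVars = ∅ ∧ (ψ.predLetters : Set ℕ) ⊆ (S : Set ℕ)) ∧
    ∀ M : Model, M ∈ κ ↔ ∀ ψ ∈ Ax, ∀ α : ℕ → M.U, Sat M ψ α

/-- φ κ-follows from ψ: {ψ, ¬φ} is not κ-satisfiable. -/
def KappaFollows (κ : Set Model) (ψ φ : FOForm) : Prop :=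
  ¬ ∃ M : Model, M ∈ κ ∧ ∃ α : ℕ → M.U, Sat M ψ α ∧ ¬ Sat M φ α

/-- κ-equivalence of formulas. -/
def KappaEquiv (κ : Set Model) (φ ψ : FOForm) : Prop :=
  KappaFollows κ φ ψ ∧ KappaFollows κ ψ φ

/-- φ(x) is κ-invariant with respect to (i,1)-modal asimulations. -/
def KappaInvariantD1 (κ : Set Model) (boxOne : Bool) (x : ℕ) (φ : FOForm) : Prop :=
  ∀ Θ : Set ℕ, (φ.predLetters : Set ℕ) ⊆ Θ →
  ∀ (M₁ M₂ : Model), M₁ ∈ κ → M₂ ∈ κ →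
  ∀ (t : M₁.U) (u : M₂.U)
    (A12 : M₁.U → M₂.U → Prop) (A21 : M₂.U → M₁.U → Prop),
    IsAsimD1 boxOne Θ M₁ M₂ t u A12 A21 →
    ∀ (a : M₁.U) (b : M₂.U), A12 a b → SatAt M₁ a x φ → SatAt M₂ b x φ

/-- φ(x) is κ-invariant with respect to (i,2)-modal asimulations. -/
def KappaInvariantD2 (κ : Set Model) (boxOne : Bool) (x : ℕ) (φ : FOForm) : Prop :=
  ∀ Θ : Set ℕ, (φ.predLetters : Set ℕ) ⊆ Θ →
  ∀ (M₁ M₂ : Model), M₁ ∈ κ → M₂ ∈ κ →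
  ∀ (t : M₁.U) (u : M₂.U)
    (A12 : M₁.U → M₂.U → Prop) (A21 : M₂.U → M₁.U → Prop)
    (B12 : M₁.U → M₂.U → Prop) (B21 : M₂.U → M₁.U → Prop),
    IsAsimD2 boxOne Θ M₁ M₂ t u A12 A21 B12 B21 →
    ∀ (a : M₁.U) (b : M₂.U), A12 a b → SatAt M₁ a x φ → SatAt M₂ b x φ

/-- φ(x) is κ-invariant with respect to (i,j)-modal asimulations
(`diamOne = true` means j = 1). -/
def KappaInvariant (κ : Set Model) (boxOne diamOne : Bool) (x : ℕ) (φ : FOForm) : Prop :=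
  if diamOne then KappaInvariantD1 κ boxOne x φ else KappaInvariantD2 κ boxOne x φ

/-!
A modal formula can only see the canonical preorder `a ≤ b`: every modal formula true at `a` is true
at `b`. Over countably saturated models this preorder, paired with its analogue for the formulas
`∃ y, R_◇ x y ∧ I y`, is itself an asimulation. So an invariant `φ` is preserved along `≤` between
such models, and two compactness arguments turn preservation into definability: were `φ` not
equivalent to a single modal formula, some saturated point `b` would satisfy all modal consequences
of `φ` but not `φ`, and some saturated point `a ≤ b` would satisfy `φ`.

Both saturation and compactness come from ultraproducts over `ℕ`. As the language has no identity,
these need no quotient: the domain is the full product of the domains.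
-/

/-! ### Assignments and vocabularies -/

theorem Sat.congr_freeVars {M : Model} {φ : FOForm} {α β : ℕ → M.U}
    (h : ∀ v ∈ φ.freeVars, α v = β v) : Sat M φ α ↔ Sat M φ β := by
  have update_eq {s : Finset ℕ} {α β : ℕ → M.U} {w : ℕ} (h : ∀ v ∈ s \ {w}, α v = β v) (u : M.U) :
      ∀ v ∈ s, Function.update α w u v = Function.update β w u v := fun v hv => by
    by_cases hvw : v = w
    · simp [hvw]
    · simp [hvw, h v (by simp [hv, hvw])]
  induction φ generalizing α β with
  | falsum => rfl
  | pred n v => simp [Sat, h v (by simp [FOForm.freeVars])]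
  | rel s v w =>
    simp [Sat, h v (by simp [FOForm.freeVars]), h w (by simp [FOForm.freeVars])]
  | conj f g ihf ihg =>
    exact and_congr (ihf fun v hv => h v (Finset.mem_union_left _ hv))
      (ihg fun v hv => h v (Finset.mem_union_right _ hv))
  | disj f g ihf ihg =>
    exact or_congr (ihf fun v hv => h v (Finset.mem_union_left _ hv))
      (ihg fun v hv => h v (Finset.mem_union_right _ hv))
  | impl f g ihf ihg =>
    exact imp_congr (ihf fun v hv => h v (Finset.mem_union_left _ hv))
      (ihg fun v hv => h v (Finset.mem_union_right _ hv))
  | all w f ih => exact forall_congr' fun u => ih (update_eq h u)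
  | ex w f ih => exact exists_congr fun u => ih (update_eq h u)

theorem satAt_iff_sat {M : Model} {φ : FOForm} {x : ℕ} (hfv : φ.freeVars ⊆ {x}) (α : ℕ → M.U) :
    SatAt M (α x) x φ ↔ Sat M φ α := by
  refine ⟨fun h => h α rfl, fun h β hβ => (Sat.congr_freeVars fun v hv => ?_).2 h⟩
  rwa [Finset.mem_singleton.1 (hfv hv)]

/-- The `Θ`-reduct of a model. Since a `Model` interprets every letter, the letters outside `Θ` are
made empty rather than forgotten. -/
def Model.reduct (M : Model) (Θ : Set ℕ) : Model where
  U := M.U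
  rel := M.rel
  relBox := M.relBox
  relDiam := M.relDiam
  pred n a := n ∈ Θ ∧ M.pred n a

theorem sat_reduct_iff {M : Model} {Θ : Set ℕ} {φ : FOForm} (hφ : (φ.predLetters : Set ℕ) ⊆ Θ)
    (α : ℕ → M.U) : Sat (M.reduct Θ) φ α ↔ Sat M φ α := by
  induction φ generalizing α with
  | falsum => rfl
  | pred n v => exact and_iff_right (hφ (by simp [FOForm.predLetters]))
  | rel s v w => cases s <;> rfl
  | conj f g ihf ihg =>
    rw [FOForm.predLetters, Finset.coe_union, Set.union_subset_iff] at hφ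
    exact and_congr (ihf hφ.1 α) (ihg hφ.2 α)
  | disj f g ihf ihg =>
    rw [FOForm.predLetters, Finset.coe_union, Set.union_subset_iff] at hφ
    exact or_congr (ihf hφ.1 α) (ihg hφ.2 α)
  | impl f g ihf ihg =>
    rw [FOForm.predLetters, Finset.coe_union, Set.union_subset_iff] at hφ
    exact imp_congr (ihf hφ.1 α) (ihg hφ.2 α)
  | all v f ih => exact forall_congr' fun u => ih hφ _
  | ex v f ih => exact exists_congr fun u => ih hφ _

theorem IsAsimD2.reduct {boxOne : Bool} {Θ : Set ℕ} {M₁ M₂ : Model} {t : M₁.U} {u : M₂.U}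
    {A12 B12 : M₁.U → M₂.U → Prop} {A21 B21 : M₂.U → M₁.U → Prop}
    (h : IsAsimD2 boxOne Θ M₁ M₂ t u A12 A21 B12 B21) :
    IsAsimD2 boxOne Set.univ (M₁.reduct Θ) (M₂.reduct Θ) t u A12 A21 B12 B21 := by
  obtain ⟨htu, base12, base21, hrest⟩ := h
  exact ⟨htu, fun a b hab n _ hn => ⟨hn.1, base12 a b hab n hn.1 hn.2⟩,
    fun a b hab n _ hn => ⟨hn.1, base21 a b hab n hn.1 hn.2⟩, hrest⟩

/-! ### Modal satisfaction -/

/-- Satisfaction of modal formulas at a point, with the clauses (□₁) and (◇₂) of the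
(1,2)-translation. -/
def MSat (M : Model) : MForm → M.U → Prop
  | .bot, _ => False
  | .prop n, a => M.pred n a
  | .conj I J, a => MSat M I a ∧ MSat M J a
  | .disj I J, a => MSat M I a ∨ MSat M J a
  | .impl I J, a => ∀ b, M.rel a b → MSat M I b → MSat M J b
  | .box I, a => ∀ b, M.relBox a b → MSat M I b
  | .diam I, a => ∀ b, M.rel a b → ∃ c, M.relDiam b c ∧ MSat M I c

theorem sat_ST_iff {M : Model} (I : MForm) (x : ℕ) (α : ℕ → M.U) :
    Sat M (ST true false I x) α ↔ MSat M I (α x) := by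
  induction I generalizing x α with
  | bot | prop => rfl
  | conj I J ihI ihJ | disj I J ihI ihJ => simp [ST, Sat, MSat, ihI, ihJ]
  | impl I J ihI ihJ => simp [ST, Sat, MSat, ihI, ihJ, Model.relOf]
  | box I ih | diam I ih => simp [ST, Sat, MSat, ih, Model.relOf]

/-- A numerical code of a modal formula, tagging each constructor, showing that there are countably
many modal formulas. -/
def MForm.code : MForm → ℕ
  | .bot => Nat.pair 0 0
  | .prop n => Nat.pair 1 n
  | .conj I J => Nat.pair 2 (Nat.pair I.code J.code)
  | .disj I J => Nat.pair 3 (Nat.pair I.code J.code)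
  | .impl I J => Nat.pair 4 (Nat.pair I.code J.code)
  | .box I => Nat.pair 5 I.code
  | .diam I => Nat.pair 6 I.code

theorem MForm.code_injective : Function.Injective MForm.code := by
  intro I
  induction I <;> intro J <;> cases J <;> grind [code, Nat.pair_eq_pair]

instance : Countable MForm :=
  MForm.code_injective.countable

/-- Finite conjunction of modal formulas; the empty conjunction is `⊥ → ⊥`. -/
def MForm.bigConj (l : List MForm) : MForm :=
  l.foldr .conj (.impl .bot .bot)

/-- Finite disjunction of modal formulas; the empty disjunction is `⊥`. -/
def MForm.bigDisj (l : List MForm) : MForm :=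
  l.foldr .disj .bot

theorem msat_bigConj {M : Model} {l : List MForm} {a : M.U} :
    MSat M (.bigConj l) a ↔ ∀ I ∈ l, MSat M I a := by
  induction l with
  | nil => simp [MForm.bigConj, MSat]
  | cons I l ih => simpa [MForm.bigConj, MSat] using fun _ => ih

theorem msat_bigDisj {M : Model} {l : List MForm} {a : M.U} :
    MSat M (.bigDisj l) a ↔ ∃ I ∈ l, MSat M I a := by
  induction l with
  | nil => simp [MForm.bigDisj, MSat]
  | cons I l ih => simpa [MForm.bigDisj, MSat] using or_congr_right ih

/-! ### Asimulations preserve modal formulas -/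

section Preservation

variable {N P : Model}

/-- Truth of `I` in `N` passes to `P` along `A`. -/
def Preserves (A : N.U → P.U → Prop) (I : MForm) : Prop :=
  ∀ ⦃a b⦄, A a b → MSat N I a → MSat P I b

variable {A B : N.U → P.U → Prop} {A' : P.U → N.U → Prop} {I J : MForm}

theorem StepCondE.preserves_impl (hstep : StepCondE N P A A') (hI : Preserves A' I)
    (hJ : Preserves A J) : Preserves A (.impl I J) := by
  intro a b hab h d hbd hd
  obtain ⟨c, hac, hcd, hdc⟩ := hstep a b d hab hbd
  exact hJ hcd (h c hac (hI hdc hd))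

theorem Box1CondE.preserves_box (hbox : Box1CondE N P A) (hI : Preserves A I) :
    Preserves A (.box I) := by
  intro a b hab h d hbd
  obtain ⟨c, hac, hcd⟩ := hbox a b d hab hbd
  exact hI hcd (h c hac)

theorem Diam2aCondE.preserves_diam (hA : Diam2aCondE N P A B) (hB : Diam2bCondE N P B A)
    (hI : Preserves A I) : Preserves A (.diam I) := by
  intro a b hab h d hbd
  obtain ⟨c, hac, hcd⟩ := hA a b d hab hbd
  obtain ⟨e, hce, he⟩ := h c hac
  obtain ⟨f, hdf, hef⟩ := hB c e d hcd hce
  exact ⟨f, hdf, hI hef he⟩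

end Preservation

theorem IsAsimD2.preserves {M₁ M₂ : Model} {t : M₁.U} {u : M₂.U}
    {A12 B12 : M₁.U → M₂.U → Prop} {A21 B21 : M₂.U → M₁.U → Prop}
    (h : IsAsimD2 true Set.univ M₁ M₂ t u A12 A21 B12 B21) (I : MForm) :
    Preserves A12 I ∧ Preserves A21 I := by
  obtain ⟨-, base12, base21, step12, step21, ⟨box12, box21⟩, diamA12, diamA21, diamB12, diamB21⟩ :=
    h
  induction I with
  | bot => exact ⟨fun _ _ _ => id, fun _ _ _ => id⟩
  | prop n =>
    exact ⟨fun a b hab => base12 a b hab n trivial, fun a b hab => base21 a b hab n trivial⟩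
  | conj I J ihI ihJ =>
    exact ⟨fun _ _ hab => And.imp (ihI.1 hab) (ihJ.1 hab),
      fun _ _ hab => And.imp (ihI.2 hab) (ihJ.2 hab)⟩
  | disj I J ihI ihJ =>
    exact ⟨fun _ _ hab => Or.imp (ihI.1 hab) (ihJ.1 hab),
      fun _ _ hab => Or.imp (ihI.2 hab) (ihJ.2 hab)⟩
  | impl I J ihI ihJ => exact ⟨step12.preserves_impl ihI.2 ihJ.1, step21.preserves_impl ihI.1 ihJ.2⟩
  | box I ih => exact ⟨box12.preserves_box ih.1, box21.preserves_box ih.2⟩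
  | diam I ih => exact ⟨diamA12.preserves_diam diamB12 ih.1, diamA21.preserves_diam diamB21 ih.2⟩

theorem invariantD2_of_equiv_ST {φ : FOForm} {x : ℕ} {I : MForm}
    (hI : Equiv φ (ST true false I x)) : InvariantD2 true x φ := by
  intro Θ hΘ M₁ M₂ t u A12 A21 B12 B21 hasim a b hab ha β hβ
  -- `I` may use letters outside `Θ`, on which an asimulation says nothing; reducts make them void.
  have sat_iff (M : Model) (α : ℕ → M.U) : Sat M φ α ↔ MSat (M.reduct Θ) I (α x) :=
    (sat_reduct_iff hΘ α).symm.trans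
      ((hI (M.reduct Θ) α).trans (sat_ST_iff (M := M.reduct Θ) I x α))
  have hIa : MSat (M₁.reduct Θ) I a := (sat_iff M₁ fun _ => a).1 (ha _ rfl)
  rw [sat_iff, hβ]
  exact (hasim.reduct.preserves I).1 hab hIa

/-! ### Countable saturation -/

section Saturation

variable {M : Model} {α : ℕ → M.U} {P : M.U → Prop}

/-- `P` is first-order definable in `M` with parameters among the values of `α`. -/
def DefinableOver (M : Model) (α : ℕ → M.U) (P : M.U → Prop) : Prop :=
  ∃ (φ : FOForm) (v : ℕ), ∀ c, P c ↔ Sat M φ (Function.update α v c)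

theorem DefinableOver.not (hP : DefinableOver M α P) : DefinableOver M α fun c => ¬ P c := by
  obtain ⟨φ, v, hφ⟩ := hP
  exact ⟨.impl φ .falsum, v, fun c => not_congr (hφ c)⟩

theorem definableOver_relOf (s : RelSym) (k : ℕ) : DefinableOver M α (M.relOf s (α k)) :=
  ⟨.rel s k (k + 1), k + 1, fun c => by simp [Sat]⟩

theorem definableOver_msat (I : MForm) : DefinableOver M α (MSat M I) :=
  ⟨ST true false I 0, 0, fun c => by simp [sat_ST_iff]⟩

theorem definableOver_exists_relDiam_msat (I : MForm) :
    DefinableOver M α fun c => ∃ d, M.relDiam c d ∧ MSat M I d :=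
  ⟨.ex 1 (.conj (.rel .diam 0 1) (ST true false I 1)), 0, fun c => by
    simp [Sat, sat_ST_iff, Model.relOf]⟩

/-- `M` is countably saturated: a countable family of subsets definable with parameters has a common
point as soon as each of its finite subfamilies has one. -/
def CountablySaturated (M : Model) : Prop :=
  ∀ (α : ℕ → M.U) ⦃κ : Type⦄ [Countable κ] (P : κ → M.U → Prop), (∀ k, DefinableOver M α (P k)) →
    (∀ t : Finset κ, ∃ c, ∀ k ∈ t, P k c) → ∃ c, ∀ k, P k c

theorem CountablySaturated.exists_relOf_forall (hM : CountablySaturated M) (s : RelSym) (a : M.U)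
    {κ : Type} [Countable κ] {P : κ → M.U → Prop} (hP : ∀ k, DefinableOver M (fun _ => a) (P k))
    (hfin : ∀ t : Finset κ, ∃ c, M.relOf s a c ∧ ∀ k ∈ t, P k c) :
    ∃ c, M.relOf s a c ∧ ∀ k, P k c := by
  obtain ⟨c, hc⟩ := hM (fun _ => a) (fun k : Option κ => k.elim (M.relOf s a) P)
    (Option.rec (definableOver_relOf s 0) hP) fun t => by
      obtain ⟨c, hac, hc⟩ := hfin t.eraseNone
      exact ⟨c, Option.rec (fun _ => hac) fun k hk => hc k (Finset.mem_eraseNone.2 hk)⟩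
  exact ⟨c, hc none, fun k => hc (some k)⟩

theorem CountablySaturated.exists_relOf_forall_msat (hM : CountablySaturated M) (s : RelSym)
    (a : M.U) (Γ Δ : Set MForm)
    (hfin : ∀ Γ₀ Δ₀ : List MForm, (∀ I ∈ Γ₀, I ∈ Γ) → (∀ I ∈ Δ₀, I ∈ Δ) →
      ∃ c, M.relOf s a c ∧ MSat M (.bigConj Γ₀) c ∧ ¬ MSat M (.bigDisj Δ₀) c) :
    ∃ c, M.relOf s a c ∧ (∀ I ∈ Γ, MSat M I c) ∧ ∀ I ∈ Δ, ¬ MSat M I c := by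
  obtain ⟨c, hac, hc⟩ := hM.exists_relOf_forall s a
    (P := Sum.elim (fun (I : Γ) c => MSat M I c) (fun (I : Δ) c => ¬ MSat M I c))
    (Sum.rec (fun I => definableOver_msat I) fun I => (definableOver_msat (I : MForm)).not)
    fun t => by
      obtain ⟨c, hac, hΓ, hΔ⟩ := hfin (t.toLeft.toList.map (↑)) (t.toRight.toList.map (↑))
        (by simp +contextual) (by simp +contextual)
      simp only [msat_bigConj, msat_bigDisj, not_exists, not_and, List.mem_map, Finset.mem_toList]
        at hΓ hΔ
      exact ⟨c, hac, Sum.rec (fun I hI => hΓ I ⟨I, Finset.mem_toLeft.2 hI, rfl⟩)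
        fun I hI => hΔ I ⟨I, Finset.mem_toRight.2 hI, rfl⟩⟩
  exact ⟨c, hac, fun I hI => hc (.inl ⟨I, hI⟩), fun I hI => hc (.inr ⟨I, hI⟩)⟩

end Saturation

/-! ### The canonical asimulation between saturated models -/

section Canonical

variable {M N : Model}

/-- Every modal formula true at `a` is true at `b`: the first component of the canonical
asimulation. -/
def ModalLE (M N : Model) (a : M.U) (b : N.U) : Prop :=
  ∀ I, MSat M I a → MSat N I b

/-- Every modal formula true at an `R_◇`-successor of `a` is true at one of `b`: the second
component of the canonical asimulation. -/
def DiamLE (M N : Model) (a : M.U) (b : N.U) : Prop :=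
  ∀ I, (∃ c, M.relDiam a c ∧ MSat M I c) → ∃ d, N.relDiam b d ∧ MSat N I d

theorem baseCondE_modalLE (Θ : Set ℕ) : BaseCondE M N Θ (ModalLE M N) :=
  fun _ _ hab n _ => hab (.prop n)

theorem stepCondE_modalLE (hM : CountablySaturated M) :
    StepCondE M N (ModalLE M N) (ModalLE N M) := by
  intro a b d hab hbd
  obtain ⟨c, hac, hΓ, hΔ⟩ := hM.exists_relOf_forall_msat .r a {I | MSat N I d} {I | ¬ MSat N I d}
    fun Γ₀ Δ₀ hΓ₀ hΔ₀ => by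
      by_contra! hc
      have hb : MSat N (.impl (.bigConj Γ₀) (.bigDisj Δ₀)) b := hab _ hc
      obtain ⟨I, hI, hdI⟩ := msat_bigDisj.1 (hb d hbd (msat_bigConj.2 hΓ₀))
      exact hΔ₀ I hI hdI
  exact ⟨c, hac, fun I hcI => by_contra fun hdI => hΔ I hdI hcI, hΓ⟩

theorem box1CondE_modalLE (hM : CountablySaturated M) : Box1CondE M N (ModalLE M N) := by
  intro a b d hab hbd
  obtain ⟨c, hac, -, hΔ⟩ := hM.exists_relOf_forall_msat .box a ∅ {I | ¬ MSat N I d}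
    fun Γ₀ Δ₀ hΓ₀ hΔ₀ => by
      by_contra! hc
      have hb : MSat N (.box (.bigDisj Δ₀)) b :=
        hab _ fun c hac => hc c hac (msat_bigConj.2 fun I hI => (hΓ₀ I hI).elim)
      obtain ⟨I, hI, hdI⟩ := msat_bigDisj.1 (hb d hbd)
      exact hΔ₀ I hI hdI
  exact ⟨c, hac, fun I hcI => by_contra fun hdI => hΔ I hdI hcI⟩

theorem diam2aCondE_modalLE (hM : CountablySaturated M) :
    Diam2aCondE M N (ModalLE M N) (DiamLE M N) := by
  intro a b d hab hbd
  let Δ : Set MForm := {I | ¬ ∃ e, N.relDiam d e ∧ MSat N I e}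
  obtain ⟨c, hac, hc⟩ := hM.exists_relOf_forall .r a
    (P := fun (I : Δ) c => ¬ ∃ e, M.relDiam c e ∧ MSat M I e)
    (fun I => (definableOver_exists_relDiam_msat (I : MForm)).not) fun t => by
      by_contra! hc
      have hb : MSat N (.diam (.bigDisj (t.toList.map (↑)))) b := hab _ fun c hac => by
        obtain ⟨I, hI, e, hce, heI⟩ := hc c hac
        exact ⟨e, hce, msat_bigDisj.2 ⟨I, List.mem_map_of_mem (Finset.mem_toList.2 hI), heI⟩⟩
      obtain ⟨e, hde, he⟩ := hb d hbd
      obtain ⟨I, hI, heI⟩ := msat_bigDisj.1 he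
      obtain ⟨J, -, rfl⟩ := List.mem_map.1 hI
      exact J.2 ⟨e, hde, heI⟩
  exact ⟨c, hac, fun I hcI => by_contra fun hdI => hc ⟨I, hdI⟩ hcI⟩

theorem diam2bCondE_diamLE (hN : CountablySaturated N) :
    Diam2bCondE M N (DiamLE M N) (ModalLE M N) := by
  intro a c b hab hac
  obtain ⟨d, hbd, hΓ, -⟩ := hN.exists_relOf_forall_msat .diam b {I | MSat M I c} ∅
    fun Γ₀ Δ₀ hΓ₀ hΔ₀ => by
      obtain ⟨d, hbd, hd⟩ := hab (.bigConj Γ₀) ⟨c, hac, msat_bigConj.2 hΓ₀⟩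
      exact ⟨d, hbd, hd, fun h => (msat_bigDisj.1 h).elim fun I hI => hΔ₀ I hI.1⟩
  exact ⟨d, hbd, hΓ⟩

theorem isAsimD2_modalLE (hM : CountablySaturated M) (hN : CountablySaturated N) (Θ : Set ℕ)
    {t : M.U} {u : N.U} (htu : ModalLE M N t u) :
    IsAsimD2 true Θ M N t u (ModalLE M N) (ModalLE N M) (DiamLE M N) (DiamLE N M) :=
  ⟨htu, baseCondE_modalLE Θ, baseCondE_modalLE Θ, stepCondE_modalLE hM, stepCondE_modalLE hN,
    ⟨box1CondE_modalLE hM, box1CondE_modalLE hN⟩, diam2aCondE_modalLE hM, diam2aCondE_modalLE hN,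
    diam2bCondE_diamLE hN, diam2bCondE_diamLE hM⟩

end Canonical

/-! ### Ultraproducts -/

section Ultraproduct

open Filter

/-- The ultraproduct of models along `𝒰`, without passing to the quotient by `𝒰`-almost everywhere
equality: a language without identity cannot tell the difference. -/
def ultraproduct {ι : Type} (𝒰 : Ultrafilter ι) (M : ι → Model) : Model where
  U := ∀ i, (M i).U
  rel a b := ∀ᶠ i in 𝒰, (M i).rel (a i) (b i)
  relBox a b := ∀ᶠ i in 𝒰, (M i).relBox (a i) (b i)
  relDiam a b := ∀ᶠ i in 𝒰, (M i).relDiam (a i) (b i)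
  pred n a := ∀ᶠ i in 𝒰, (M i).pred n (a i)

theorem update_ultraproduct_apply {ι : Type} {𝒰 : Ultrafilter ι} {M : ι → Model}
    (α : ℕ → (ultraproduct 𝒰 M).U) (v : ℕ) (u : (ultraproduct 𝒰 M).U) (i : ι) :
    (fun w => Function.update α v u w i) = Function.update (fun w => α w i) v (u i) :=
  funext (Function.apply_update (fun _ (a : (ultraproduct 𝒰 M).U) => a i) α v u)

theorem sat_ultraproduct_iff {ι : Type} {𝒰 : Ultrafilter ι} {M : ι → Model} {φ : FOForm}
    (α : ℕ → (ultraproduct 𝒰 M).U) :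
    Sat (ultraproduct 𝒰 M) φ α ↔ ∀ᶠ i in 𝒰, Sat (M i) φ fun v => α v i := by
  have (i : ι) : Nonempty (M i).U := ⟨α 0 i⟩
  induction φ generalizing α with
  | falsum => exact eventually_const.symm
  | pred n v => rfl
  | rel s v w => cases s <;> rfl
  | conj f g ihf ihg => exact (and_congr (ihf α) (ihg α)).trans eventually_and.symm
  | disj f g ihf ihg => exact (or_congr (ihf α) (ihg α)).trans Ultrafilter.eventually_or.symm
  | impl f g ihf ihg => exact (imp_congr (ihf α) (ihg α)).trans Ultrafilter.eventually_imp.symm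
  | all v f ih =>
    rw [← not_iff_not, ← Ultrafilter.eventually_not]
    simp only [Sat, ih, update_ultraproduct_apply, not_forall, ← Ultrafilter.eventually_not]
    exact (Filter.skolem
      (P := fun i u => ¬ Sat (M i) f (Function.update (fun w => α w i) v u))).symm
  | ex v f ih =>
    simp only [Sat, ih, update_ultraproduct_apply]
    exact (Filter.skolem (P := fun i u => Sat (M i) f (Function.update (fun w => α w i) v u))).symm

theorem exists_forall_eventually_of_finset {κ : Type*} [Countable κ] {l : Filter ℕ} (hl : l ≤ atTop)
    {X : ℕ → Type*} [∀ i, Nonempty (X i)] {P : κ → ∀ i, X i → Prop}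
    (hfin : ∀ t : Finset κ, ∀ᶠ i in l, ∃ y, ∀ k ∈ t, P k i y) :
    ∃ f : ∀ i, X i, ∀ k, ∀ᶠ i in l, P k i (f i) := by
  classical
  obtain ⟨e, he⟩ := exists_injective_nat κ
  -- At stage `i` satisfy the longest initial segment of conditions, up to length `i`, that can be.
  let S (i n : ℕ) : Prop := ∃ y, ∀ k, e k < n → P k i y
  let len (i : ℕ) : ℕ := Nat.findGreatest (S i) i
  have eventually_S (n : ℕ) : ∀ᶠ i in l, S i n := by
    have hn : {k | e k < n}.Finite := (Set.finite_Iio n).preimage he.injOn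
    simpa [S] using hfin hn.toFinset
  have lt_len (k : κ) : ∀ᶠ i in l, e k < len i := by
    filter_upwards [eventually_S (e k + 1), hl (eventually_ge_atTop (e k + 1))] with i hi hle
    exact Nat.le_findGreatest hle hi
  have S_len : ∀ᶠ i in l, S i (len i) :=
    (eventually_S 0).mono fun i hi => Nat.findGreatest_spec i.zero_le hi
  obtain ⟨f, hf⟩ := Filter.skolem.1 S_len
  exact ⟨f, fun k => hf.mp ((lt_len k).mono fun i hi hfi => hfi k hi)⟩

theorem countablySaturated_ultraproduct {𝒰 : Ultrafilter ℕ} (h𝒰 : (𝒰 : Filter ℕ) ≤ atTop)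
    (M : ℕ → Model) : CountablySaturated (ultraproduct 𝒰 M) := by
  intro α κ _ P hP hfin
  choose φ v hφ using hP
  have los (k : κ) (c : (ultraproduct 𝒰 M).U) :
      P k c ↔ ∀ᶠ i in 𝒰, Sat (M i) (φ k) (Function.update (fun w => α w i) (v k) (c i)) := by
    simp only [hφ, sat_ultraproduct_iff, update_ultraproduct_apply]
  have (i : ℕ) : Nonempty (M i).U := ⟨α 0 i⟩
  obtain ⟨f, hf⟩ := exists_forall_eventually_of_finset h𝒰
    (P := fun k i y => Sat (M i) (φ k) (Function.update (fun w => α w i) (v k) y)) fun t => by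
      obtain ⟨c, hc⟩ := hfin t
      have hct := (Filter.eventually_all_finset t).2 fun k hk => (los k c).1 (hc k hk)
      exact hct.mono fun i hi => ⟨c i, hi⟩
  exact ⟨f, fun k => (los k f).2 (hf k)⟩

theorem exists_countablySaturated_sat {κ : Type} [Countable κ] (φ : FOForm) (θ : κ → FOForm)
    (hfin : ∀ t : Finset κ, ∃ (M : Model) (α : ℕ → M.U), Sat M φ α ∧ ∀ k ∈ t, Sat M (θ k) α) :
    ∃ (M : Model) (α : ℕ → M.U), CountablySaturated M ∧ Sat M φ α ∧ ∀ k, Sat M (θ k) α := by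
  let Pointed := {p : Σ M : Model, ℕ → M.U // Sat p.1 φ p.2}
  choose M α hφ hθ using hfin
  have : Nonempty Pointed := ⟨⟨⟨M ∅, α ∅⟩, hφ ∅⟩⟩
  have h𝒰 : (hyperfilter ℕ : Filter ℕ) ≤ atTop := Nat.hyperfilter_le_atTop
  obtain ⟨p, hp⟩ := exists_forall_eventually_of_finset h𝒰
    (P := fun k _ (p : Pointed) => Sat p.1.1 (θ k) p.1.2) fun t =>
      .of_forall fun _ => ⟨⟨⟨M t, α t⟩, hφ t⟩, hθ t⟩
  refine ⟨ultraproduct (hyperfilter ℕ) fun i => (p i).1.1, fun v i => (p i).1.2 v,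
    countablySaturated_ultraproduct h𝒰 _, ?_, fun k => ?_⟩
  · exact (sat_ultraproduct_iff _).2 (.of_forall fun i => (p i).2)
  · exact (sat_ultraproduct_iff _).2 (hp k)

end Ultraproduct

/-! ### Preservation along the canonical preorder implies modal definability -/

section Definability

variable {φ : FOForm} {x : ℕ}

theorem exists_consequences_not_sat (hφ : ¬ ∃ I, Equiv φ (ST true false I x)) :
    ∃ (N : Model) (β : ℕ → N.U), CountablySaturated N ∧ ¬ Sat N φ β ∧
      ∀ I, Entails φ (ST true false I x) → MSat N I (β x) := by
  let Consequence := {I : MForm // Entails φ (ST true false I x)}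
  obtain ⟨N, β, hN, hnot, hβ⟩ := exists_countablySaturated_sat (.impl φ .falsum)
    (fun I : Consequence => ST true false I x) fun t => by
      by_contra! hcon
      refine hφ ⟨.bigConj (t.toList.map (↑)), fun M α => ?_⟩
      simp only [sat_ST_iff, msat_bigConj, List.forall_mem_map, Finset.mem_toList]
      refine ⟨fun hα I _ => (sat_ST_iff _ x α).1 (I.2 M α hα), fun hα => by_contra fun hnot => ?_⟩
      obtain ⟨I, hI, hnI⟩ := hcon M α hnot
      exact hnI ((sat_ST_iff _ x α).2 (hα I hI))
  exact ⟨N, β, hN, hnot, fun I hI => (sat_ST_iff I x β).1 (hβ ⟨I, hI⟩)⟩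

theorem exists_sat_modalLE {N : Model} {b : N.U}
    (hb : ∀ I, Entails φ (ST true false I x) → MSat N I b) :
    ∃ (M : Model) (α : ℕ → M.U), CountablySaturated M ∧ Sat M φ α ∧ ModalLE M N (α x) b := by
  let Refuted := {I : MForm // ¬ MSat N I b}
  obtain ⟨M, α, hM, hα, hnot⟩ := exists_countablySaturated_sat φ
    (fun I : Refuted => .impl (ST true false I x) .falsum) fun t => by
      by_contra! hcon
      have entails : Entails φ (ST true false (.bigDisj (t.toList.map (↑))) x) := fun M α hα => by
        obtain ⟨I, hI, hnI⟩ := hcon M α hα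
        exact (sat_ST_iff _ x α).2 (msat_bigDisj.2 ⟨I, List.mem_map_of_mem (Finset.mem_toList.2 hI),
          (sat_ST_iff _ x α).1 (not_not.1 hnI)⟩)
      obtain ⟨I, hI, hbI⟩ := msat_bigDisj.1 (hb _ entails)
      obtain ⟨J, -, rfl⟩ := List.mem_map.1 hI
      exact J.2 hbI
  exact ⟨M, α, hM, hα, fun I hI => by_contra fun hbI =>
    hnot ⟨I, hbI⟩ ((sat_ST_iff I x α).2 hI)⟩

theorem exists_equiv_ST_of_preserved
    (hφ : ∀ (M N : Model) (α : ℕ → M.U) (β : ℕ → N.U), CountablySaturated M →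
      CountablySaturated N → ModalLE M N (α x) (β x) → Sat M φ α → Sat N φ β) :
    ∃ I, Equiv φ (ST true false I x) := by
  by_contra hno
  obtain ⟨N, β, hN, hnot, hβ⟩ := exists_consequences_not_sat hno
  obtain ⟨M, α, hM, hα, hle⟩ := exists_sat_modalLE hβ
  exact hnot (hφ M N α β hM hN hle hα)

end Definability

/-- **Theorem 2, case (i,j) = (1,2).**  φ(x) is logically equivalent to the
(1,2)-standard x-translation of a modal intuitionistic formula iff φ(x) is
invariant with respect to (1,2)-modal asimulations. -/
theorem statement_7 (x : ℕ) (φ : FOForm) (hfv : φ.freeVars ⊆ {x}) :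
    (∃ I : MForm, Equiv φ (ST true false I x)) ↔ InvariantD2 true x φ := by
  constructor
  · rintro ⟨I, hI⟩
    exact invariantD2_of_equiv_ST hI
  · intro hinv
    refine exists_equiv_ST_of_preserved fun M N α β hM hN hle hα => ?_
    have hβ : SatAt N (β x) x φ :=
      hinv Set.univ (Set.subset_univ _) M N (α x) (β x) _ _ _ _
        (isAsimD2_modalLE hM hN Set.univ hle) _ _ hle ((satAt_iff_sat hfv α).2 hα)
    exact (satAt_iff_sat hfv β).1 hβ

end ModalIntAsim
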